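/- Let λ > 0 and α, α_0, α̃, α̃_0 ∈ (0,1] with α̃/α > α̃_0/α_0. Then for every u > 0 one has lim_{t→∞} t^{−α̃/α} log ( 1/E^1_{α_0,1}(λ t^{α̃_0}) + Σ_{k≥1} (λ u t^{α̃})^k / ( Γ(αk+1) · E^1_{α,1}(λ t^{α̃}) ) ) = max{ λ^{1/α}(u^{1/α} − 1), 0 }. -/

import Mathlib

open Filter Topology

/-- The classical Mittag-Leffler function `E^1_{α,1}(u) = ∑_{k≥0} u^k / Γ(αk+1)`. -/
noncomputable def mittagLeffler (α : ℝ) (u : ℝ) : ℝ :=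
  ∑' k : ℕ, u ^ k / Real.Gamma (α * (k : ℝ) + 1)

/-!
Writing `y = x ^ (1 / α)`, the terms of `mittagLeffler α x` are the values of `y ^ s / Γ(s + 1)` at
`s ∈ αℕ`. This quantity never exceeds `exp y`, while for `x ≥ 1` each `y ^ n / n!` is at most `x`
times the term with `k = ⌊n / α⌋`. Dilating `y` slightly turns these termwise bounds into bounds for
the sums at the cost of a geometric series, so `log (mittagLeffler α x) ∼ x ^ (1 / α)`.

At the scale `t ^ (-(αt / α))` the logarithm of a sum becomes the maximum of the logarithms. The
first summand contributes `0`, because `t ^ (αt0 / α0)` is negligible against `t ^ (αt / α)`. The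
second is `(mittagLeffler α (λ u t ^ αt) - 1) / mittagLeffler α (λ t ^ αt)` and contributes
`(λ u) ^ (1 / α) - λ ^ (1 / α)`.
-/

open Asymptotics

lemma rpow_div_Gamma_add_one_le_exp {y s : ℝ} (hy : 0 ≤ y) (hs : 0 ≤ s) :
    y ^ s / Real.Gamma (s + 1) ≤ Real.exp y := by
  have hint := Real.GammaIntegral_convergent (s := s + 1) (by linarith)
  have hsub : Set.Ioi y ⊆ Set.Ioi 0 := Set.Ioi_subset_Ioi hy
  have htail : Real.exp (-y) * y ^ s ≤ Real.Gamma (s + 1) := by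
    calc Real.exp (-y) * y ^ s = ∫ x in Set.Ioi y, Real.exp (-x) * y ^ s := by
          rw [MeasureTheory.integral_mul_const, integral_exp_neg_Ioi]
      _ ≤ ∫ x in Set.Ioi y, Real.exp (-x) * x ^ (s + 1 - 1) := by
          refine MeasureTheory.setIntegral_mono_on ((integrableOn_exp_neg_Ioi y).mul_const _)
            (hint.mono_set hsub) measurableSet_Ioi fun x hx ↦ ?_
          rw [add_sub_cancel_right]
          gcongr
          exact hx.le
      _ ≤ ∫ x in Set.Ioi 0, Real.exp (-x) * x ^ (s + 1 - 1) := by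
          refine MeasureTheory.setIntegral_mono_set hint ?_ hsub.eventuallyLE
          filter_upwards [MeasureTheory.ae_restrict_mem measurableSet_Ioi] with x hx
          exact mul_nonneg (Real.exp_pos _).le (Real.rpow_nonneg (le_of_lt hx) _)
      _ = Real.Gamma (s + 1) := (Real.Gamma_eq_integral (by linarith)).symm
  rw [div_le_iff₀ (Real.Gamma_pos_of_pos (by linarith))]
  calc y ^ s = Real.exp y * (Real.exp (-y) * y ^ s) := by
        rw [← mul_assoc, ← Real.exp_add, add_neg_cancel, Real.exp_zero, one_mul]
    _ ≤ Real.exp y * Real.Gamma (s + 1) := by gcongr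

lemma Gamma_add_one_le_factorial {s : ℝ} {n : ℕ} (hs : 0 ≤ s) (hsn : s ≤ n) :
    Real.Gamma (s + 1) ≤ n.factorial := by
  rcases le_total s 1 with hs1 | hs1
  · calc Real.Gamma (s + 1) ≤ max (Real.Gamma 1) (Real.Gamma 2) :=
          Real.convexOn_Gamma.le_max_of_mem_Icc (Set.mem_Ioi.2 one_pos) (Set.mem_Ioi.2 two_pos)
            ⟨by linarith, by linarith⟩
      _ = 1 := by rw [Real.Gamma_one, Real.Gamma_two, max_self]
      _ ≤ n.factorial := mod_cast n.factorial_pos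
  · rw [← Real.Gamma_nat_eq_factorial]
    exact Real.Gamma_strictMonoOn_Ici.monotoneOn (Set.mem_Ici.2 (by linarith))
      (Set.mem_Ici.2 (by linarith)) (by linarith)

lemma exp_mul_le_of_pow_div_factorial_le {c y A : ℝ} (hc : 0 ≤ c) (hc1 : c < 1)
    (hA : ∀ n : ℕ, y ^ n / n.factorial ≤ A) : Real.exp (c * y) ≤ (1 - c)⁻¹ * A := by
  have hexp : HasSum (fun n : ℕ ↦ (c * y) ^ n / n.factorial) (Real.exp (c * y)) := by
    rw [Real.exp_eq_exp_ℝ]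
    exact NormedSpace.expSeries_div_hasSum_exp (c * y)
  refine hasSum_le (fun n ↦ ?_) hexp ((hasSum_geometric_of_lt_one hc hc1).mul_right A)
  rw [mul_pow, mul_div_assoc]
  gcongr
  exact hA n

lemma max_log_le_log_add {a b : ℝ} (ha : 0 < a) (hb : 0 < b) :
    max (Real.log a) (Real.log b) ≤ Real.log (a + b) :=
  max_le (Real.log_le_log ha (by linarith)) (Real.log_le_log hb (by linarith))

lemma log_add_le_log_two_add_max {a b : ℝ} (ha : 0 < a) (hb : 0 < b) :
    Real.log (a + b) ≤ Real.log 2 + max (Real.log a) (Real.log b) := by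
  have hmax : 0 < max a b := lt_max_of_lt_left ha
  calc Real.log (a + b) ≤ Real.log (2 * max a b) :=
        Real.log_le_log (by positivity) (by linarith [le_max_left a b, le_max_right a b])
    _ = Real.log 2 + Real.log (max a b) := Real.log_mul two_ne_zero hmax.ne'
    _ = Real.log 2 + max (Real.log a) (Real.log b) := by
        rw [Real.strictMonoOn_log.monotoneOn.map_max ha hb]

lemma tendsto_mul_log_add {ι : Type*} {l : Filter ι} {s a b : ι → ℝ} {A B : ℝ}
    (hs : Tendsto s l (𝓝 0)) (hs0 : ∀ᶠ i in l, 0 ≤ s i)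
    (ha0 : ∀ᶠ i in l, 0 < a i) (hb0 : ∀ᶠ i in l, 0 < b i)
    (ha : Tendsto (fun i ↦ s i * Real.log (a i)) l (𝓝 A))
    (hb : Tendsto (fun i ↦ s i * Real.log (b i)) l (𝓝 B)) :
    Tendsto (fun i ↦ s i * Real.log (a i + b i)) l (𝓝 (max A B)) := by
  have hupper : Tendsto
      (fun i ↦ s i * Real.log 2 + max (s i * Real.log (a i)) (s i * Real.log (b i)))
      l (𝓝 (max A B)) := by
    simpa only [zero_mul, zero_add] using (hs.mul_const (Real.log 2)).add (ha.max hb)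
  refine tendsto_of_tendsto_of_tendsto_of_le_of_le' (ha.max hb) hupper ?_ ?_
  · filter_upwards [hs0, ha0, hb0] with i hsi hai hbi
    rw [← mul_max_of_nonneg _ _ hsi]
    gcongr
    exact max_log_le_log_add hai hbi
  · filter_upwards [hs0, ha0, hb0] with i hsi hai hbi
    rw [← mul_max_of_nonneg _ _ hsi, ← mul_add]
    gcongr
    exact log_add_le_log_two_add_max hai hbi

section MittagLeffler

variable {α : ℝ}

lemma Gamma_mul_natCast_add_one_pos (hα : 0 < α) (k : ℕ) :
    0 < Real.Gamma (α * (k : ℝ) + 1) :=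
  Real.Gamma_pos_of_pos (by positivity)

lemma rpow_one_div_rpow_mul_natCast (hα : α ≠ 0) {x : ℝ} (hx : 0 ≤ x) (k : ℕ) :
    (x ^ (1 / α)) ^ (α * (k : ℝ)) = x ^ k := by
  rw [← Real.rpow_mul hx, ← mul_assoc, one_div_mul_cancel hα, one_mul, Real.rpow_natCast]

lemma pow_div_Gamma_le_exp_mul_geometric (hα : 0 < α) {c x : ℝ} (hc : 0 < c) (hx : 0 ≤ x)
    (k : ℕ) :
    x ^ k / Real.Gamma (α * (k : ℝ) + 1) ≤
      Real.exp (c * x ^ (1 / α)) * ((c ^ α)⁻¹) ^ k := by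
  have hy : 0 ≤ x ^ (1 / α) := Real.rpow_nonneg hx _
  have hdilated : (c ^ α) ^ k * x ^ k / Real.Gamma (α * (k : ℝ) + 1) ≤
      Real.exp (c * x ^ (1 / α)) := by
    have h := rpow_div_Gamma_add_one_le_exp (y := c * x ^ (1 / α)) (s := α * k)
      (by positivity) (by positivity)
    rwa [Real.mul_rpow hc.le hy, rpow_one_div_rpow_mul_natCast hα.ne' hx, Real.rpow_mul hc.le,
      Real.rpow_natCast] at h
  rw [inv_pow, ← div_eq_mul_inv, le_div_iff₀ (by positivity)]
  calc x ^ k / Real.Gamma (α * (k : ℝ) + 1) * (c ^ α) ^ k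
      = (c ^ α) ^ k * x ^ k / Real.Gamma (α * (k : ℝ) + 1) := by ring
    _ ≤ Real.exp (c * x ^ (1 / α)) := hdilated

lemma hasSum_inv_rpow_geometric (hα : 0 < α) {c : ℝ} (hc : 1 < c) :
    HasSum (fun k : ℕ ↦ ((c ^ α)⁻¹) ^ k) (1 - (c ^ α)⁻¹)⁻¹ :=
  hasSum_geometric_of_lt_one (by positivity) (inv_lt_one_of_one_lt₀ (Real.one_lt_rpow hc hα))

lemma summable_mittagLeffler (hα : 0 < α) (x : ℝ) :
    Summable fun k : ℕ ↦ x ^ k / Real.Gamma (α * (k : ℝ) + 1) := by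
  refine Summable.of_norm_bounded
    ((hasSum_inv_rpow_geometric hα one_lt_two).summable.mul_left
      (Real.exp (2 * |x| ^ (1 / α)))) fun k ↦ ?_
  rw [norm_div, norm_pow, Real.norm_of_nonneg (Gamma_mul_natCast_add_one_pos hα k).le]
  exact pow_div_Gamma_le_exp_mul_geometric hα two_pos (abs_nonneg x) k

lemma mittagLeffler_sub_one (hα : 0 < α) (x : ℝ) :
    mittagLeffler α x - 1 =
      ∑' k : ℕ, x ^ (k + 1) / Real.Gamma (α * ((k : ℝ) + 1) + 1) := by
  simp [mittagLeffler, (summable_mittagLeffler hα x).tsum_eq_zero_add]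

lemma pow_div_Gamma_le_mittagLeffler (hα : 0 < α) {x : ℝ} (hx : 0 ≤ x) (k : ℕ) :
    x ^ k / Real.Gamma (α * (k : ℝ) + 1) ≤ mittagLeffler α x :=
  (summable_mittagLeffler hα x).le_tsum k fun j _ ↦
    div_nonneg (pow_nonneg hx j) (Gamma_mul_natCast_add_one_pos hα j).le

lemma one_le_mittagLeffler (hα : 0 < α) {x : ℝ} (hx : 0 ≤ x) : 1 ≤ mittagLeffler α x := by
  simpa using pow_div_Gamma_le_mittagLeffler hα hx 0

lemma tendsto_mittagLeffler_atTop (hα : 0 < α) : Tendsto (mittagLeffler α) atTop atTop := by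
  have hΓ : 0 < Real.Gamma (α + 1) := Real.Gamma_pos_of_pos (by linarith)
  refine tendsto_atTop_mono' atTop ?_ (tendsto_id.atTop_div_const hΓ)
  filter_upwards [eventually_ge_atTop 0] with x hx
  simpa using pow_div_Gamma_le_mittagLeffler hα hx 1

lemma mittagLeffler_le_exp (hα : 0 < α) {c x : ℝ} (hc : 1 < c) (hx : 0 ≤ x) :
    mittagLeffler α x ≤ Real.exp (c * x ^ (1 / α)) * (1 - (c ^ α)⁻¹)⁻¹ :=
  hasSum_le (pow_div_Gamma_le_exp_mul_geometric hα (by linarith) hx)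
    (summable_mittagLeffler hα x).hasSum ((hasSum_inv_rpow_geometric hα hc).mul_left _)

lemma log_mittagLeffler_le (hα : 0 < α) {c x : ℝ} (hc : 1 < c) (hx : 0 ≤ x) :
    Real.log (mittagLeffler α x) ≤ c * x ^ (1 / α) + Real.log (1 - (c ^ α)⁻¹)⁻¹ := by
  have hratio : (c ^ α)⁻¹ < 1 := inv_lt_one_of_one_lt₀ (Real.one_lt_rpow hc hα)
  have h := Real.log_le_log (one_pos.trans_le (one_le_mittagLeffler hα hx))
    (mittagLeffler_le_exp hα hc hx)
  rwa [Real.log_mul (Real.exp_pos _).ne' (inv_pos.2 (sub_pos.2 hratio)).ne',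
    Real.log_exp] at h

lemma rpow_pow_div_factorial_le_mul_mittagLeffler (hα : 0 < α) {x : ℝ} (hx : 1 ≤ x) (n : ℕ) :
    (x ^ (1 / α)) ^ n / n.factorial ≤ x * mittagLeffler α x := by
  have hx0 : 0 ≤ x := by linarith
  set k := ⌊(n : ℝ) / α⌋₊
  have hkn : α * k ≤ n := by
    rw [← le_div_iff₀' hα]
    exact Nat.floor_le (by positivity)
  have hnk : n ≤ α * ((k + 1 : ℕ) : ℝ) := by
    rw [← div_le_iff₀' hα]
    exact_mod_cast (Nat.lt_floor_add_one ((n : ℝ) / α)).le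
  have hpow : (x ^ (1 / α)) ^ n ≤ x ^ (k + 1) := by
    rw [← rpow_one_div_rpow_mul_natCast hα.ne' hx0 (k + 1), ← Real.rpow_natCast]
    exact Real.rpow_le_rpow_of_exponent_le (Real.one_le_rpow hx (by positivity)) hnk
  calc (x ^ (1 / α)) ^ n / n.factorial ≤ x ^ (k + 1) / Real.Gamma (α * (k : ℝ) + 1) := by
        gcongr
        exact Gamma_add_one_le_factorial (by positivity) hkn
    _ = x * (x ^ k / Real.Gamma (α * (k : ℝ) + 1)) := by ring
    _ ≤ x * mittagLeffler α x := by
        gcongr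
        exact pow_div_Gamma_le_mittagLeffler hα hx0 k

lemma le_log_mittagLeffler (hα : 0 < α) {c x : ℝ} (hc : 0 ≤ c) (hc1 : c < 1) (hx : 1 ≤ x) :
    c * x ^ (1 / α) - Real.log (1 - c)⁻¹ - Real.log x ≤ Real.log (mittagLeffler α x) := by
  have hE : 0 < mittagLeffler α x := one_pos.trans_le (one_le_mittagLeffler hα (by linarith))
  have h := Real.log_le_log (Real.exp_pos _) (exp_mul_le_of_pow_div_factorial_le hc hc1
    (rpow_pow_div_factorial_le_mul_mittagLeffler hα hx))
  rw [Real.log_exp, Real.log_mul (inv_pos.2 (sub_pos.2 hc1)).ne' (by positivity),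
    Real.log_mul (by linarith) hE.ne'] at h
  linarith

lemma tendsto_log_mittagLeffler_div_rpow (hα : 0 < α) :
    Tendsto (fun x ↦ Real.log (mittagLeffler α x) / x ^ (1 / α)) atTop (𝓝 1) := by
  have hy : Tendsto (fun x : ℝ ↦ x ^ (1 / α)) atTop atTop := tendsto_rpow_atTop (by positivity)
  have hlog : Tendsto (fun x : ℝ ↦ Real.log x / x ^ (1 / α)) atTop (𝓝 0) :=
    (isLittleO_log_rpow_atTop (by positivity)).tendsto_div_nhds_zero
  refine tendsto_order.2 ⟨fun a ha ↦ ?_, fun b hb ↦ ?_⟩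
  · obtain ⟨c, hc, hc1⟩ := exists_between (max_lt ha one_pos)
    have hlower : Tendsto
        (fun x : ℝ ↦ c - Real.log (1 - c)⁻¹ / x ^ (1 / α) - Real.log x / x ^ (1 / α))
        atTop (𝓝 c) := by
      simpa only [sub_zero] using ((hy.const_div_atTop (Real.log (1 - c)⁻¹)).const_sub c).sub hlog
    filter_upwards [hlower.eventually_const_lt ((le_max_left a 0).trans_lt hc),
      eventually_ge_atTop 1] with x hax hx
    have hy0 : 0 < x ^ (1 / α) := by positivity
    refine hax.trans_le ?_
    rw [le_div_iff₀ hy0, sub_mul, sub_mul, div_mul_cancel₀ _ hy0.ne', div_mul_cancel₀ _ hy0.ne']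
    exact le_log_mittagLeffler hα ((le_max_right a 0).trans hc.le) hc1 hx
  · obtain ⟨c, hc1, hcb⟩ := exists_between hb
    have hupper : Tendsto (fun x : ℝ ↦ c + Real.log (1 - (c ^ α)⁻¹)⁻¹ / x ^ (1 / α))
        atTop (𝓝 c) := by
      simpa only [add_zero] using (hy.const_div_atTop (Real.log (1 - (c ^ α)⁻¹)⁻¹)).const_add c
    filter_upwards [hupper.eventually_lt_const hcb, eventually_gt_atTop 0] with x hxb hx
    have hy0 : 0 < x ^ (1 / α) := by positivity
    refine lt_of_le_of_lt ?_ hxb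
    rw [div_le_iff₀ hy0, add_mul, div_mul_cancel₀ _ hy0.ne']
    exact log_mittagLeffler_le hα hc1 hx.le

lemma log_mittagLeffler_isEquivalent (hα : 0 < α) :
    (fun x ↦ Real.log (mittagLeffler α x)) ~[atTop] fun x ↦ x ^ (1 / α) :=
  isEquivalent_of_tendsto_one (tendsto_log_mittagLeffler_div_rpow hα)

lemma log_mittagLeffler_sub_one_isEquivalent (hα : 0 < α) :
    (fun x ↦ Real.log (mittagLeffler α x - 1)) ~[atTop] fun x ↦ x ^ (1 / α) := by
  have hE := tendsto_mittagLeffler_atTop hα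
  have hsub : (fun x ↦ mittagLeffler α x - 1) ~[atTop] mittagLeffler α :=
    IsEquivalent.refl.sub_isLittleO
      ((isLittleO_const_left_of_ne one_ne_zero).2 (tendsto_norm_atTop_atTop.comp hE))
  exact (hsub.log hE).trans (log_mittagLeffler_isEquivalent hα)

end MittagLeffler

lemma tendsto_rpow_neg_mul_of_isEquivalent_rpow {f : ℝ → ℝ} {β c p : ℝ}
    (hf : f ~[atTop] fun x ↦ x ^ β) (hc : 0 < c) (hp : 0 < p) :
    Tendsto (fun t : ℝ ↦ t ^ (-(p * β)) * f (c * t ^ p)) atTop (𝓝 (c ^ β)) := by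
  have hx : Tendsto (fun t : ℝ ↦ c * t ^ p) atTop atTop :=
    (tendsto_rpow_atTop hp).const_mul_atTop hc
  have hscaled := (IsEquivalent.refl (u := fun t : ℝ ↦ t ^ (-(p * β)))).mul (hf.comp_tendsto hx)
  refine hscaled.symm.tendsto_nhds (tendsto_const_nhds.congr' ?_)
  filter_upwards [eventually_gt_atTop 0] with t ht
  have htp : t ^ (-(p * β)) * t ^ (p * β) = 1 := by
    rw [← Real.rpow_add ht, neg_add_cancel, Real.rpow_zero]
  simp only [Pi.mul_apply, Function.comp_apply]
  rw [Real.mul_rpow hc.le (by positivity), ← Real.rpow_mul ht.le, mul_left_comm, htp, mul_one]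

lemma tendsto_rpow_neg_mul_log_mittagLeffler_zero {α c p r : ℝ} (hα : 0 < α) (hc : 0 ≤ c)
    (hr : 0 < r) (hpr : p / α < r) :
    Tendsto (fun t : ℝ ↦ t ^ (-r) * Real.log (mittagLeffler α (c * t ^ p))) atTop (𝓝 0) := by
  set C := Real.log (1 - ((2 : ℝ) ^ α)⁻¹)⁻¹
  have hbound : Tendsto (fun t : ℝ ↦ 2 * c ^ (1 / α) * t ^ (-(r - p / α)) + C * t ^ (-r))
      atTop (𝓝 0) := by
    simpa only [mul_zero, add_zero] using
      ((tendsto_rpow_neg_atTop (sub_pos.2 hpr)).const_mul (2 * c ^ (1 / α))).add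
        ((tendsto_rpow_neg_atTop hr).const_mul C)
  refine tendsto_of_tendsto_of_tendsto_of_le_of_le' tendsto_const_nhds hbound ?_ ?_
  · filter_upwards [eventually_gt_atTop 0] with t ht
    exact mul_nonneg (by positivity) (Real.log_nonneg (one_le_mittagLeffler hα (by positivity)))
  · filter_upwards [eventually_gt_atTop 0] with t ht
    have hpow : (c * t ^ p) ^ (1 / α) = c ^ (1 / α) * t ^ (p / α) := by
      rw [Real.mul_rpow hc (by positivity), ← Real.rpow_mul ht.le, mul_one_div]
    calc t ^ (-r) * Real.log (mittagLeffler α (c * t ^ p))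
        ≤ t ^ (-r) * (2 * (c * t ^ p) ^ (1 / α) + C) := by
          gcongr
          exact log_mittagLeffler_le hα one_lt_two (by positivity)
      _ = 2 * c ^ (1 / α) * (t ^ (p / α) * t ^ (-r)) + C * t ^ (-r) := by rw [hpow]; ring
      _ = 2 * c ^ (1 / α) * t ^ (-(r - p / α)) + C * t ^ (-r) := by
          rw [← Real.rpow_add ht, neg_sub, sub_eq_add_neg]

lemma tendsto_rpow_neg_mul_log_mittagLeffler_ratio {α lam u p : ℝ} (hα : 0 < α)
    (hlam : 0 < lam) (hu : 0 < u) (hp : 0 < p) :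
    Tendsto (fun t : ℝ ↦ t ^ (-(p / α)) *
        Real.log ((mittagLeffler α (lam * u * t ^ p) - 1) / mittagLeffler α (lam * t ^ p)))
      atTop (𝓝 (lam ^ (1 / α) * (u ^ (1 / α) - 1))) := by
  have hnum := tendsto_rpow_neg_mul_of_isEquivalent_rpow
    (log_mittagLeffler_sub_one_isEquivalent hα) (mul_pos hlam hu) hp
  have hden := tendsto_rpow_neg_mul_of_isEquivalent_rpow
    (log_mittagLeffler_isEquivalent hα) hlam hp
  have hx : ∀ {c : ℝ}, 0 < c → Tendsto (fun t : ℝ ↦ mittagLeffler α (c * t ^ p)) atTop atTop :=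
    fun hc ↦ (tendsto_mittagLeffler_atTop hα).comp ((tendsto_rpow_atTop hp).const_mul_atTop hc)
  have hlim : (lam * u) ^ (1 / α) - lam ^ (1 / α) = lam ^ (1 / α) * (u ^ (1 / α) - 1) := by
    rw [Real.mul_rpow hlam.le hu.le, mul_sub, mul_one]
  rw [← hlim]
  refine (hnum.sub hden).congr' ?_
  filter_upwards [(hx (mul_pos hlam hu)).eventually_gt_atTop 1,
    (hx hlam).eventually_gt_atTop 0] with t hnum1 hden0
  rw [Real.log_div (sub_pos.2 hnum1).ne' hden0.ne', mul_one_div, mul_sub]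

theorem lemma_for_counterexample_general
    (lam α α0 αt αt0 : ℝ) (hlam : 0 < lam) (hα : 0 < α) (hα0 : 0 < α0) (hαt : 0 < αt)
    (hcase : αt0 / α0 < αt / α) (u : ℝ) (hu : 0 < u) :
    Tendsto (fun t : ℝ ↦ t ^ (-(αt / α)) *
        Real.log (1 / mittagLeffler α0 (lam * t ^ αt0) +
          ∑' k : ℕ, (lam * u * t ^ αt) ^ (k + 1)
            / (Real.Gamma (α * ((k : ℝ) + 1) + 1) * mittagLeffler α (lam * t ^ αt))))
      atTop (𝓝 (max (lam ^ (1 / α) * (u ^ (1 / α) - 1)) 0)) := by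
  have hr : 0 < αt / α := div_pos hαt hα
  have hsum (t : ℝ) : ∑' k : ℕ, (lam * u * t ^ αt) ^ (k + 1)
      / (Real.Gamma (α * ((k : ℝ) + 1) + 1) * mittagLeffler α (lam * t ^ αt)) =
      (mittagLeffler α (lam * u * t ^ αt) - 1) / mittagLeffler α (lam * t ^ αt) := by
    simp only [mittagLeffler_sub_one hα, ← tsum_div_const, div_div]
  have hfirst : Tendsto (fun t : ℝ ↦ t ^ (-(αt / α)) *
      Real.log (1 / mittagLeffler α0 (lam * t ^ αt0))) atTop (𝓝 0) := by
    simpa only [one_div, Real.log_inv, mul_neg, neg_zero] using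
      (tendsto_rpow_neg_mul_log_mittagLeffler_zero hα0 hlam.le hr hcase).neg
  have hsecond := tendsto_rpow_neg_mul_log_mittagLeffler_ratio hα hlam hu hαt
  have hx : Tendsto (fun t : ℝ ↦ lam * u * t ^ αt) atTop atTop :=
    (tendsto_rpow_atTop hαt).const_mul_atTop (mul_pos hlam hu)
  simp only [hsum]
  rw [max_comm]
  refine tendsto_mul_log_add (tendsto_rpow_neg_atTop hr) ?_ ?_ ?_ hfirst hsecond
  · filter_upwards [eventually_ge_atTop 0] with t ht using Real.rpow_nonneg ht _
  · filter_upwards [eventually_ge_atTop 0] with t ht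
    exact one_div_pos.2 (one_pos.trans_le (one_le_mittagLeffler hα0 (by positivity)))
  · filter_upwards [eventually_ge_atTop 0,
      ((tendsto_mittagLeffler_atTop hα).comp hx).eventually_gt_atTop 1] with t ht hE
    exact div_pos (sub_pos.2 hE) (one_pos.trans_le (one_le_mittagLeffler hα (by positivity)))

/-- Lemma 4.1 of the paper: for `λ > 0` and `α, α_0, α̃, α̃_0 ∈ (0,1]` with `α̃/α > α̃_0/α_0`,
for every `u > 0`,
`t^{-α̃/α} log( 1/E^1_{α_0,1}(λt^{α̃_0}) + Σ_{k≥1} (λut^{α̃})^k/(Γ(αk+1) E^1_{α,1}(λt^{α̃})) )`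
tends to `max{λ^{1/α}(u^{1/α}-1), 0}` as `t → ∞`. -/
theorem lemma_for_counterexample
    (lam α α0 αt αt0 : ℝ) (hlam : 0 < lam)
    (hα : α ∈ Set.Ioc (0 : ℝ) 1) (hα0 : α0 ∈ Set.Ioc (0 : ℝ) 1)
    (hαt : αt ∈ Set.Ioc (0 : ℝ) 1) (hαt0 : αt0 ∈ Set.Ioc (0 : ℝ) 1)
    (hcase : αt0 / α0 < αt / α) :
    ∀ u : ℝ, 0 < u →
      Tendsto (fun t : ℝ => t ^ (-(αt / α)) *
          Real.log (1 / mittagLeffler α0 (lam * t ^ αt0) +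
            ∑' k : ℕ, (lam * u * t ^ αt) ^ (k + 1)
              / (Real.Gamma (α * ((k : ℝ) + 1) + 1) * mittagLeffler α (lam * t ^ αt))))
        atTop (𝓝 (max (lam ^ (1 / α) * (u ^ (1 / α) - 1)) 0)) :=
  lemma_for_counterexample_general lam α α0 αt αt0 hlam hα.1 hα0.1 hαt.1 hcase
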